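/- For every integer n ≥ 2, the inequality (n² − 3n + 2)·M_1(n) − 8·M_2(n) ≥ 0 holds, with equality if and only if n is prime. -/

import Mathlib

/-- The generalized MacMahon partition function `M_a(n)`: the sum of
`m_1 ⋯ m_a` over all tuples of positive integers `0 < s_1 < ⋯ < s_a` and
`m_1, …, m_a > 0` with `n = m_1 s_1 + ⋯ + m_a s_a`.  (All such solutions
satisfy `m_i, s_i ∈ [1, n]`, so the finite range below captures them all.) -/
def MacMahonM (a n : ℕ) : ℕ :=
  ∑ p ∈ (Fintype.piFinset (fun _ : Fin a => Finset.Icc 1 n) ×ˢ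
          Fintype.piFinset (fun _ : Fin a => Finset.Icc 1 n)).filter
      (fun p => (∀ i j : Fin a, i < j → p.2 i < p.2 j) ∧ ∑ i, p.1 i * p.2 i = n),
    ∏ i, p.1 i

/-- Solutions `(a, b, x, y)` in positive integers of `a x + b y = n`. -/
def QQ (n : ℕ) : Finset (ℕ × ℕ × ℕ × ℕ) :=
  (Finset.Icc 1 n ×ˢ Finset.Icc 1 n ×ˢ Finset.Icc 1 n ×ˢ Finset.Icc 1 n).filter
    (fun p => p.1 * p.2.2.1 + p.2.1 * p.2.2.2 = n)

theorem mem_QQ (n a b x y : ℕ) :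
    (a, b, x, y) ∈ QQ n ↔ 0 < a ∧ 0 < b ∧ 0 < x ∧ 0 < y ∧ a * x + b * y = n := by
  simp only [QQ, Finset.mem_filter, Finset.mem_product, Finset.mem_Icc]
  constructor
  · rintro ⟨h, h'⟩
    refine ⟨?_, ?_, ?_, ?_, h'⟩ <;> omega
  · rintro ⟨h1, h2, h3, h4, h5⟩
    have := Nat.le_mul_of_pos_right a h3
    have := Nat.le_mul_of_pos_left x h1
    have := Nat.le_mul_of_pos_right b h4
    have := Nat.le_mul_of_pos_left y h2
    refine ⟨⟨⟨?_, ?_⟩, ⟨?_, ?_⟩, ⟨?_, ?_⟩, ⟨?_, ?_⟩⟩, h5⟩ <;> omega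

theorem swap_xy (n : ℕ) (g : ℕ → ℕ → ℤ) :
    ∑ p ∈ (QQ n).filter (fun p => p.2.2.1 < p.2.2.2), g p.1 p.2.1 =
    ∑ p ∈ (QQ n).filter (fun p => p.2.2.2 < p.2.2.1), g p.2.1 p.1 := by
  refine Finset.sum_nbij' (fun p => (p.2.1, p.1, p.2.2.2, p.2.2.1))
    (fun p => (p.2.1, p.1, p.2.2.2, p.2.2.1)) ?_ ?_ ?_ ?_ ?_
  all_goals rintro ⟨a, b, x, y⟩
  all_goals simp only [Finset.mem_filter, mem_QQ]
  all_goals grind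

theorem swap_ab (n : ℕ) (g : ℕ → ℕ → ℤ) :
    ∑ p ∈ (QQ n).filter (fun p => p.1 < p.2.1), g p.1 p.2.1 =
    ∑ p ∈ (QQ n).filter (fun p => p.2.1 < p.1), g p.2.1 p.1 := by
  refine Finset.sum_nbij' (fun p => (p.2.1, p.1, p.2.2.2, p.2.2.1))
    (fun p => (p.2.1, p.1, p.2.2.2, p.2.2.1)) ?_ ?_ ?_ ?_ ?_
  all_goals rintro ⟨a, b, x, y⟩
  all_goals simp only [Finset.mem_filter, mem_QQ]
  all_goals grind

theorem shear (n : ℕ) (g : ℕ → ℕ → ℤ) :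
    ∑ p ∈ (QQ n).filter (fun p => p.2.2.2 < p.2.2.1), g p.1 (p.1 + p.2.1) =
    ∑ p ∈ (QQ n).filter (fun p => p.1 < p.2.1), g p.1 p.2.1 := by
  refine Finset.sum_nbij' (fun p => (p.1, p.1 + p.2.1, p.2.2.1 - p.2.2.2, p.2.2.2))
    (fun p => (p.1, p.2.1 - p.1, p.2.2.1 + p.2.2.2, p.2.2.2)) ?_ ?_ ?_ ?_ ?_
  · rintro ⟨a, b, x, y⟩
    simp only [Finset.mem_filter, mem_QQ]
    rintro ⟨⟨h1, h2, h3, h4, h5⟩, h6⟩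
    obtain ⟨k, rfl⟩ := Nat.exists_eq_add_of_lt h6
    have : y + k + 1 - y = k + 1 := by omega
    rw [this]
    refine ⟨⟨h1, by omega, by omega, h4, ?_⟩, by omega⟩
    rw [← h5]; ring
  · rintro ⟨a, b, x, y⟩
    simp only [Finset.mem_filter, mem_QQ]
    rintro ⟨⟨h1, h2, h3, h4, h5⟩, h6⟩
    obtain ⟨k, rfl⟩ := Nat.exists_eq_add_of_lt h6
    have : a + k + 1 - a = k + 1 := by omega
    rw [this]
    refine ⟨⟨h1, by omega, by omega, h4, ?_⟩, by omega⟩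
    rw [← h5]; ring
  all_goals rintro ⟨a, b, x, y⟩
  all_goals simp only [Finset.mem_filter, mem_QQ, Prod.mk.injEq]
  all_goals intro h
  · refine ⟨trivial, ?_, ?_, trivial⟩ <;> omega
  · refine ⟨trivial, ?_, ?_, trivial⟩ <;> omega
  · trivial

theorem tri (s : Finset (ℕ × ℕ × ℕ × ℕ)) (u v : ℕ × ℕ × ℕ × ℕ → ℕ)
    (f : ℕ × ℕ × ℕ × ℕ → ℤ) :
    ∑ p ∈ s, f p = ∑ p ∈ s.filter (fun p => u p < v p), f p
      + ∑ p ∈ s.filter (fun p => v p < u p), f p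
      + ∑ p ∈ s.filter (fun p => u p = v p), f p := by
  simp only [Finset.sum_filter, ← Finset.sum_add_distrib]
  refine Finset.sum_congr rfl fun p _ => ?_
  rcases lt_trichotomy (u p) (v p) with h | h | h
  · simp [h, h.ne, h.le]
  · simp [h]
  · simp [h, h.ne', h.le]

theorem diag (n : ℕ) (hn : 0 < n) (g : ℕ → ℕ → ℕ → ℤ) :
    ∑ p ∈ (QQ n).filter (fun p => p.2.2.1 = p.2.2.2), g p.1 p.2.1 p.2.2.1 =
    ∑ d ∈ n.divisors, ∑ a ∈ Finset.Ico 1 d, g a (d - a) (n / d) := by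
  rw [Finset.sum_sigma']
  refine Finset.sum_nbij' (fun p => ⟨p.1 + p.2.1, p.1⟩)
    (fun q => (q.2, q.1 - q.2, n / q.1, n / q.1)) ?_ ?_ ?_ ?_ ?_
  · rintro ⟨a, b, x, y⟩
    simp only [Finset.mem_filter, mem_QQ, Finset.mem_sigma, Nat.mem_divisors, Finset.mem_Ico]
    rintro ⟨⟨h1, h2, h3, h4, h5⟩, rfl⟩
    exact ⟨⟨⟨x, by rw [← h5]; ring⟩, hn.ne'⟩, h1, by omega⟩
  · rintro ⟨d, a⟩
    simp only [Finset.mem_filter, mem_QQ, Finset.mem_sigma, Nat.mem_divisors, Finset.mem_Ico]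
    rintro ⟨⟨h1, h2⟩, h3, h4⟩
    have hd : 0 < d := by omega
    refine ⟨⟨h3, by omega, Nat.div_pos (Nat.le_of_dvd hn h1) hd,
      Nat.div_pos (Nat.le_of_dvd hn h1) hd, ?_⟩, trivial⟩
    rw [← add_mul, Nat.add_sub_cancel' h4.le, Nat.mul_div_cancel' h1]
  · rintro ⟨a, b, x, y⟩
    simp only [Finset.mem_filter, mem_QQ, Prod.mk.injEq]
    rintro ⟨⟨h1, h2, h3, h4, h5⟩, rfl⟩
    have : n / (a + b) = x := by
      rw [← h5, ← add_mul]; exact Nat.mul_div_cancel_left _ (by omega)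
    exact ⟨trivial, by omega, this, this⟩
  · rintro ⟨d, a⟩
    simp only [Finset.mem_sigma, Finset.mem_Ico]
    rintro ⟨_, h3, h4⟩
    simp [Nat.add_sub_cancel' h4.le]
  · rintro ⟨a, b, x, y⟩
    simp only [Finset.mem_filter, mem_QQ]
    rintro ⟨⟨h1, h2, h3, h4, h5⟩, rfl⟩
    have : n / (a + b) = x := by
      rw [← h5, ← add_mul]; exact Nat.mul_div_cancel_left _ (by omega)
    rw [this, Nat.add_sub_cancel_left]

theorem dual (n : ℕ) (g : ℕ → ℤ) :
    ∑ p ∈ (QQ n).filter (fun p => p.1 = p.2.1), g p.1 =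
    ∑ p ∈ (QQ n).filter (fun p => p.2.2.1 = p.2.2.2), g p.2.2.1 := by
  refine Finset.sum_nbij' (fun p => (p.2.2.1, p.2.2.2, p.1, p.2.1))
    (fun p => (p.2.2.1, p.2.2.2, p.1, p.2.1)) ?_ ?_ ?_ ?_ ?_
  all_goals rintro ⟨a, b, x, y⟩
  all_goals simp only [Finset.mem_filter, mem_QQ]
  all_goals grind

theorem M1_eq (n : ℕ) (hn : 0 < n) : MacMahonM 1 n = ∑ d ∈ n.divisors, d := by
  unfold MacMahonM
  refine Finset.sum_nbij' (fun p => p.1 0) (fun d => (fun _ => d, fun _ => n / d)) ?_ ?_ ?_ ?_ ?_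
  · rintro ⟨m, s⟩
    simp only [Finset.mem_filter, Finset.mem_product, Fintype.mem_piFinset, Finset.mem_Icc,
      Nat.mem_divisors, Fin.sum_univ_one]
    rintro ⟨_, _, h⟩
    exact ⟨⟨_, h.symm⟩, hn.ne'⟩
  · intro d
    simp only [Finset.mem_filter, Finset.mem_product, Fintype.mem_piFinset, Finset.mem_Icc,
      Nat.mem_divisors, Fin.sum_univ_one]
    rintro ⟨h, _⟩
    have hd := Nat.pos_of_dvd_of_pos h hn
    refine ⟨⟨fun _ => ⟨hd, Nat.le_of_dvd hn h⟩, fun _ =>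
      ⟨Nat.div_pos (Nat.le_of_dvd hn h) hd, Nat.div_le_self _ _⟩⟩, ?_, Nat.mul_div_cancel' h⟩
    intro i j hij
    omega
  · rintro ⟨m, s⟩
    simp only [Finset.mem_filter, Finset.mem_product, Fintype.mem_piFinset, Finset.mem_Icc,
      Fin.sum_univ_one, Prod.mk.injEq]
    rintro ⟨⟨h1, _⟩, _, h⟩
    refine ⟨funext fun i => by rw [Subsingleton.elim i 0], funext fun i => ?_⟩
    rw [Subsingleton.elim i 0]
    exact Nat.div_eq_of_eq_mul_right (h1 0).1 h.symm
  · intro d _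
    rfl
  · rintro ⟨m, s⟩ _
    simp

theorem M2_eq (n : ℕ) : (MacMahonM 2 n : ℤ) =
    ∑ p ∈ (QQ n).filter (fun p => p.2.2.1 < p.2.2.2), (p.1 : ℤ) * p.2.1 := by
  unfold MacMahonM
  push_cast
  refine Finset.sum_nbij' (fun p => (p.1 0, p.1 1, p.2 0, p.2 1))
    (fun p => (![p.1, p.2.1], ![p.2.2.1, p.2.2.2])) ?_ ?_ ?_ ?_ ?_
  · rintro ⟨m, s⟩
    simp only [QQ, Finset.mem_filter, Finset.mem_product, Fintype.mem_piFinset, Finset.mem_Icc,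
      Fin.sum_univ_two]
    rintro ⟨⟨h1, h2⟩, h3, h4⟩
    exact ⟨⟨⟨h1 0, h1 1, h2 0, h2 1⟩, h4⟩, h3 0 1 (by decide)⟩
  · rintro ⟨a, b, x, y⟩
    simp only [QQ, Finset.mem_filter, Finset.mem_product, Fintype.mem_piFinset, Finset.mem_Icc,
      Fin.sum_univ_two, Fin.forall_fin_two]
    rintro ⟨⟨⟨h1, h2, h3, h4⟩, h5⟩, h6⟩
    simp_all
  · rintro ⟨m, s⟩ _
    simp only [Prod.mk.injEq]
    constructor <;> funext i <;> fin_cases i <;> rfl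
  · rintro ⟨a, b, x, y⟩ _
    rfl
  · rintro ⟨m, s⟩ _
    simp

theorem sum_aux (d : ℕ) (c : ℤ) : 6 * ∑ a ∈ Finset.range d, (a : ℤ) * (c - a) =
    3 * c * d * (d - 1) - d * (d - 1) * (2 * d - 1) := by
  induction d with
  | zero => simp
  | succ k ih => rw [Finset.sum_range_succ, mul_add, ih]; push_cast; ring

theorem sum_ico (d : ℕ) (hd : 0 < d) :
    6 * ∑ a ∈ Finset.Ico 1 d, (a : ℤ) * ((d - a : ℕ) : ℤ) = (d : ℤ) ^ 3 - d := by
  have h := sum_aux d d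
  rw [Finset.range_eq_Ico, Finset.sum_eq_sum_Ico_succ_bot hd] at h
  have : ∑ a ∈ Finset.Ico 1 d, (a : ℤ) * ((d - a : ℕ) : ℤ) =
      ∑ a ∈ Finset.Ico 1 d, (a : ℤ) * ((d : ℤ) - a) := by
    refine Finset.sum_congr rfl fun a ha => ?_
    rw [Finset.mem_Ico] at ha
    rw [Nat.cast_sub ha.2.le]
  rw [this]
  simp only [Nat.cast_zero, zero_mul, zero_add] at h
  rw [h]; ring

theorem M2_closed (n : ℕ) (hn : 0 < n) : 8 * (MacMahonM 2 n : ℤ) =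
    ∑ d ∈ n.divisors, ((d : ℤ) ^ 3 + (1 - 2 * n) * d) := by
  -- diagonal sums
  have hD : 6 * ∑ p ∈ (QQ n).filter (fun p => p.2.2.1 = p.2.2.2), (p.1 : ℤ) * p.2.1 =
      ∑ d ∈ n.divisors, ((d : ℤ) ^ 3 - d) := by
    rw [diag n hn (fun a b _ => (a : ℤ) * b), Finset.mul_sum]
    exact Finset.sum_congr rfl fun d hd => sum_ico d (Nat.pos_of_mem_divisors hd)
  have hS : ∑ p ∈ (QQ n).filter (fun p => p.2.2.1 = p.2.2.2), ((p.1 : ℤ) + p.2.1) ^ 2 =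
      ∑ d ∈ n.divisors, ((d : ℤ) - 1) * d ^ 2 := by
    rw [diag n hn (fun a b _ => ((a : ℤ) + b) ^ 2)]
    refine Finset.sum_congr rfl fun d hd => ?_
    have hd' := Nat.pos_of_mem_divisors hd
    rw [Finset.sum_congr rfl (g := fun _ => (d : ℤ) ^ 2)]
    · simp [Nat.cast_sub hd']
    · intro a ha
      rw [Finset.mem_Ico] at ha
      rw [Nat.cast_sub ha.2.le]; ring
  have hE : ∑ p ∈ (QQ n).filter (fun p => p.1 = p.2.1), (p.1 : ℤ) ^ 2 =
      ∑ d ∈ n.divisors, ((n : ℤ) * d - d ^ 2) := by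
    rw [dual n (fun a => (a : ℤ) ^ 2), diag n hn (fun _ _ x => (x : ℤ) ^ 2),
      ← Nat.sum_div_divisors n (fun d => (n : ℤ) * d - (d : ℤ) ^ 2)]
    refine Finset.sum_congr rfl fun d hd => ?_
    have hd' := Nat.pos_of_mem_divisors hd
    have h : (d : ℤ) * ((n / d : ℕ) : ℤ) = n := by
      exact_mod_cast Nat.mul_div_cancel' (Nat.dvd_of_mem_divisors hd)
    simp only [Finset.sum_const, Nat.card_Ico, nsmul_eq_mul, Nat.cast_sub hd']
    rw [← h]; push_cast; ring
  -- the main recursion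
  have t1 := tri (QQ n) (fun p => p.1) (fun p => p.2.1)
    (fun p => (p.1 : ℤ) ^ 2 - p.1 * p.2.1 + (p.2.1 : ℤ) ^ 2)
  have t2 := tri (QQ n) (fun p => p.2.2.1) (fun p => p.2.2.2)
    (fun p => (p.1 : ℤ) ^ 2 + p.1 * p.2.1 + (p.2.1 : ℤ) ^ 2)
  have t3 := tri (QQ n) (fun p => p.2.2.1) (fun p => p.2.2.2)
    (fun p => (p.1 : ℤ) * p.2.1)
  have s1 := swap_ab n (fun a b => (a : ℤ) ^ 2 - a * b + (b : ℤ) ^ 2)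
  have s2 := swap_xy n (fun a b => (a : ℤ) ^ 2 + a * b + (b : ℤ) ^ 2)
  have s3 := swap_xy n (fun a b => (a : ℤ) * b)
  have sh := shear n (fun a b => (a : ℤ) ^ 2 - a * b + (b : ℤ) ^ 2)
  have e1 : ∑ p ∈ (QQ n).filter (fun p => p.2.1 < p.1),
      ((p.2.1 : ℤ) ^ 2 - p.2.1 * p.1 + (p.1 : ℤ) ^ 2) =
      ∑ p ∈ (QQ n).filter (fun p => p.2.1 < p.1),
      ((p.1 : ℤ) ^ 2 - p.1 * p.2.1 + (p.2.1 : ℤ) ^ 2) :=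
    Finset.sum_congr rfl fun p _ => by ring
  have e2 : ∑ p ∈ (QQ n).filter (fun p => p.2.2.2 < p.2.2.1),
      ((p.2.1 : ℤ) ^ 2 + p.2.1 * p.1 + (p.1 : ℤ) ^ 2) =
      ∑ p ∈ (QQ n).filter (fun p => p.2.2.2 < p.2.2.1),
      ((p.1 : ℤ) ^ 2 + p.1 * p.2.1 + (p.2.1 : ℤ) ^ 2) :=
    Finset.sum_congr rfl fun p _ => by ring
  have e3 : ∑ p ∈ (QQ n).filter (fun p => p.2.2.2 < p.2.2.1), ((p.2.1 : ℤ) * p.1) =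
      ∑ p ∈ (QQ n).filter (fun p => p.2.2.2 < p.2.2.1), ((p.1 : ℤ) * p.2.1) :=
    Finset.sum_congr rfl fun p _ => by ring
  have e4 : ∑ p ∈ (QQ n).filter (fun p => p.2.2.2 < p.2.2.1),
      ((p.1 : ℤ) ^ 2 - p.1 * ((p.1 + p.2.1 : ℕ) : ℤ) + ((p.1 + p.2.1 : ℕ) : ℤ) ^ 2) =
      ∑ p ∈ (QQ n).filter (fun p => p.2.2.2 < p.2.2.1),
      ((p.1 : ℤ) ^ 2 + p.1 * p.2.1 + (p.2.1 : ℤ) ^ 2) :=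
    Finset.sum_congr rfl fun p _ => by push_cast; ring
  have e5 : ∑ p ∈ (QQ n).filter (fun p => p.1 = p.2.1),
      ((p.1 : ℤ) ^ 2 - p.1 * p.2.1 + (p.2.1 : ℤ) ^ 2) =
      ∑ p ∈ (QQ n).filter (fun p => p.1 = p.2.1), (p.1 : ℤ) ^ 2 :=
    Finset.sum_congr rfl fun p hp => by rw [← (Finset.mem_filter.1 hp).2]; ring
  have e6 : ∑ p ∈ (QQ n).filter (fun p => p.2.2.1 = p.2.2.2),
      ((p.1 : ℤ) ^ 2 + p.1 * p.2.1 + (p.2.1 : ℤ) ^ 2) =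
      ∑ p ∈ (QQ n).filter (fun p => p.2.2.1 = p.2.2.2), ((p.1 : ℤ) + p.2.1) ^ 2
      - ∑ p ∈ (QQ n).filter (fun p => p.2.2.1 = p.2.2.2), (p.1 : ℤ) * p.2.1 := by
    rw [← Finset.sum_sub_distrib]
    exact Finset.sum_congr rfl fun p _ => by ring
  have e7 : ∑ p ∈ QQ n, ((p.1 : ℤ) ^ 2 + p.1 * p.2.1 + (p.2.1 : ℤ) ^ 2) =
      ∑ p ∈ QQ n, ((p.1 : ℤ) ^ 2 - p.1 * p.2.1 + (p.2.1 : ℤ) ^ 2)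
      + 2 * ∑ p ∈ QQ n, (p.1 : ℤ) * p.2.1 := by
    rw [Finset.mul_sum, ← Finset.sum_add_distrib]
    exact Finset.sum_congr rfl fun p _ => by ring
  have f1 : 3 * ∑ d ∈ n.divisors, ((d : ℤ) ^ 3 + (1 - 2 * n) * d) =
      6 * ∑ d ∈ n.divisors, ((d : ℤ) - 1) * d ^ 2 - 6 * ∑ d ∈ n.divisors, ((n : ℤ) * d - d ^ 2)
      - 3 * ∑ d ∈ n.divisors, ((d : ℤ) ^ 3 - d) := by
    simp only [Finset.mul_sum, ← Finset.sum_sub_distrib]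
    exact Finset.sum_congr rfl fun d _ => by ring
  have hM := M2_eq n
  linarith

theorem prime_detect_M1_M2 (n : ℕ) (hn : 2 ≤ n) :
    ((n : ℤ) ^ 2 - 3 * n + 2) * MacMahonM 1 n - 8 * MacMahonM 2 n ≥ 0 ∧
      (((n : ℤ) ^ 2 - 3 * n + 2) * MacMahonM 1 n - 8 * MacMahonM 2 n = 0 ↔ n.Prime) := by
  have hn0 : 0 < n := by omega
  have key : ((n : ℤ) ^ 2 - 3 * n + 2) * MacMahonM 1 n - 8 * MacMahonM 2 n =
      ∑ d ∈ n.properDivisors.erase 1, (d : ℤ) * ((n : ℤ) ^ 2 - n + 1 - (d : ℤ) ^ 2) := by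
    rw [M2_closed n hn0, M1_eq n hn0]
    push_cast
    rw [Finset.mul_sum, ← Finset.sum_sub_distrib, ← Nat.insert_self_properDivisors hn0.ne',
      Finset.sum_insert Nat.self_notMem_properDivisors, add_comm,
      ← Finset.add_sum_erase _ _ (Nat.one_mem_properDivisors_iff_one_lt.2 (by omega : 1 < n))]
    have : ∀ x y z w : ℤ, x = y → z + w = 0 → z + x + w = y := by intros; linarith
    refine this _ _ _ _ (Finset.sum_congr rfl fun d _ => by ring) (by push_cast; ring)
  have pos : ∀ d ∈ n.properDivisors.erase 1,
      0 < (d : ℤ) * ((n : ℤ) ^ 2 - n + 1 - (d : ℤ) ^ 2) := by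
    intro d hd
    rw [Finset.mem_erase, Nat.mem_properDivisors] at hd
    obtain ⟨_, h2, h3⟩ := hd
    have h0 : (0 : ℤ) < d := by exact_mod_cast Nat.pos_of_dvd_of_pos h2 hn0
    have h4 : (d : ℤ) + 1 ≤ n := by exact_mod_cast h3
    refine mul_pos h0 ?_
    nlinarith
  rw [key]
  refine ⟨Finset.sum_nonneg fun d hd => (pos d hd).le, ?_⟩
  rw [Finset.sum_eq_zero_iff_of_nonneg fun d hd => (pos d hd).le,
    ← Nat.properDivisors_eq_singleton_one_iff_prime]
  constructor
  · intro h
    have hE : n.properDivisors.erase 1 = ∅ :=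
      Finset.eq_empty_of_forall_notMem fun d hd => (pos d hd).ne' (h d hd)
    rw [← Finset.insert_erase (Nat.one_mem_properDivisors_iff_one_lt.2 (by omega : 1 < n)), hE]
    rfl
  · intro h
    rw [h]
    simp
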